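/- Let Γ be a countable directed graph, F a potential and β ∈ ℝ, and assume there is a vertex v₀ with 0 < Σ_{n=0}^∞ A(β)^n_{v₀,v} < ∞ for all v ∈ Γ_V. For an e^{βF}-conformal measure m on P(Γ), the following are equivalent: (a) there is a ray p such that m is concentrated on {q ∈ Wan(Γ) : for all v ∈ Γ_V, lim_{k→∞} K_β(v, s(q_k)) and lim_{k→∞} K_β(v, s(p_k)) exist and are equal}; (b) m is concentrated on {q ∈ P(Γ) : for all v ∈ Γ_V, lim_{k→∞} K_β(v, s(q_k)) exists and equals m(Z(v))/m(Z(v₀))}; (c) m is extremal among the e^{βF}-conformal measures on P(Γ); (d) m is ergodic for the shift σ on P(Γ). -/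

import Mathlib

/-!
Let `G` be the Green function of `A(β)` and `K(v, w) = G(v, w) / G(v₀, w)` the Martin kernel.

Conformality says that `m` behaves like a Markov measure. Unfolding it over all finite paths gives
the occupation formula `∫_{Z(v)} ∑ᵢ f(σⁱ q) dm(q) = ∫ G(v, s(q₁)) f(q) dm(q)`
(`Conformal.lintegral_tailSum`). Three consequences are used.

* *Transience.* With `f` the indicator of `Z(w)`, the number of visits to `w` has finite integral
  over each `Z(v)`, so `m`-almost every path is wandering (`Conformal.ae_eventually_ne`). Moreover,
  since `G(v₀, ·) > 0`, a shift-invariant set that is null inside `Z(v₀)` is null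
  (`Conformal.null_of_null`), so that almost sure statements about tails need only be checked on
  `Z(v₀)`.

* *Almost sure convergence of `K(v, s(q_k))`.* If `f` is supported where the path leaves a set for
  the last time, the sum on the left has at most one nonzero term, so the kernel `K(v, ·)` read off
  at such last exits is the density of the law started from `v` with respect to the law started
  from `v₀`. For successively larger exit sets these densities form a reversed martingale, and the
  increments are orthogonal (`Conformal.orth`). A Kolmogorov-type maximal inequality
  (`Conformal.energy`) bounds the oscillation along the path, which yields `Conformal.ae_tendsto`.

* *Integral representation.* Passing to the limit gives `m(Z(v)) = ∫_{Z(v₀)} lim K(v, ·) dm`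
  (`Conformal.lintegral_martinLim`).

The equivalences follow. If the Martin limits are almost surely constant, the representation
identifies the constant as `m(Z(v)) / m(Z(v₀))` (`Conformal.martin_of_const`). This applies when the
limits agree with those along a fixed ray, and also when `m` is ergodic, since the limits are shift
invariant. If the Martin limits are almost surely these constants and `ν ≤ m` is conformal, then the
representation for `ν` shows that `ν` is proportional to `m` on the sets `Z(v)`, and a
conformal measure is determined by these values (`Conformal.eq_smul`); so `m` is extremal. If `m` is
extremal, its restriction to an invariant set of positive measure is conformal and dominated by `m`,
hence a multiple of `m`, which is ergodicity. Finally, erasing the loops of one typical wandering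
path produces a ray with the same Martin limits (`Wandering.exists_ray`).
-/

open MeasureTheory Filter Topology
open scoped ENNReal NNReal

namespace GraphKMS

variable {V A : Type}

/-- The space `P(Γ)` of infinite paths of a directed graph with vertex set `V`,
arrow set `A`, source map `s` and range map `r`. -/
structure PathSpace (s r : A → V) : Type where
  seq : ℕ → A
  compat : ∀ i, r (seq i) = s (seq (i + 1))

/-- The Borel σ-algebra of `P(Γ)`, i.e. the trace on `P(Γ)` of the Borel σ-algebra of the
product `A^ℕ` with `A` discrete. -/
instance (s r : A → V) : MeasurableSpace (PathSpace s r) :=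
  MeasurableSpace.comap (fun p => p.seq) (@MeasurableSpace.pi ℕ (fun _ => A) (fun _ => ⊤))

/-- The shift map `σ`. -/
def shift (s r : A → V) (p : PathSpace s r) : PathSpace s r :=
  ⟨fun i => p.seq (i + 1), fun i => p.compat (i + 1)⟩

/-- The cylinder set `Z(v)` of a vertex. -/
def cylV (s r : A → V) (v : V) : Set (PathSpace s r) := {p | s (p.seq 0) = v}

/-- The cylinder set `Z(a)` of an arrow. -/
def cylA (s r : A → V) (a : A) : Set (PathSpace s r) := {p | p.seq 0 = a}

/-- A finite path: a source vertex together with a compatible list of arrows.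
The empty list corresponds to the path of length `0` given by the vertex `src`. -/
structure FinPath (s r : A → V) : Type where
  src : V
  arrows : List A
  head_src : ∀ h : arrows ≠ [], s (arrows.head h) = src
  chain : arrows.Chain' (fun a b => r a = s b)

/-- The range `r(μ)` of a finite path. -/
def finRng (s r : A → V) (μ : FinPath s r) : V :=
  match μ.arrows.getLast? with
  | none => μ.src
  | some a => r a

/-- The additive extension `F(μ)` of a potential to finite paths. -/
def finWt (s r : A → V) (F : A → ℝ) (μ : FinPath s r) : ℝ := (μ.arrows.map F).sum

/-- The cylinder set `Z(μ)` of a finite path. -/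
def finCyl (s r : A → V) (μ : FinPath s r) : Set (PathSpace s r) :=
  {p | s (p.seq 0) = μ.src ∧ ∀ i : Fin μ.arrows.length, p.seq i.1 = μ.arrows.get i}

/-- The set of vertices occurring in a finite path. -/
def finVerts (s r : A → V) (μ : FinPath s r) : Set V :=
  {μ.src} ∪ {v | ∃ a ∈ μ.arrows, s a = v ∨ r a = v}

/-- The entries of the matrix `A(β)`. -/
noncomputable def Amat (s r : A → V) (F : A → ℝ) (β : ℝ) (v w : V) : ℝ≥0∞ :=
  ∑' a : {a : A // s a = v ∧ r a = w}, ENNReal.ofReal (Real.exp (-(β * F a.1)))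

/-- Powers of a `[0,∞]`-valued matrix. -/
noncomputable def matPow (M : V → V → ℝ≥0∞) : ℕ → V → V → ℝ≥0∞
  | 0 => fun v w => ({v} : Set V).indicator (fun _ => (1 : ℝ≥0∞)) w
  | n + 1 => fun v w => ∑' u : V, M v u * matPow M n u w

/-- The entries of `A(β)ⁿ`. -/
noncomputable def Apow (s r : A → V) (F : A → ℝ) (β : ℝ) (n : ℕ) (v w : V) : ℝ≥0∞ :=
  matPow (Amat s r F β) n v w

/-- The Green function `Σₙ A(β)ⁿ_{v,w}`. -/
noncomputable def Green (s r : A → V) (F : A → ℝ) (β : ℝ) (v w : V) : ℝ≥0∞ :=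
  ∑' n : ℕ, Apow s r F β n v w

/-- The Martin kernel `K_β(v,w)` with base point `v₀`. -/
noncomputable def MartinK (s r : A → V) (F : A → ℝ) (β : ℝ) (v₀ v w : V) : ℝ≥0∞ :=
  Green s r F β v w / Green s r F β v₀ w

/-- A harmonic vector for a `[0,∞]`-valued matrix: a nonzero, finite-valued,
nonnegative vector fixed by the matrix. -/
def IsHarmonic (M : V → V → ℝ≥0∞) (ψ : V → ℝ≥0∞) : Prop :=
  ψ ≠ 0 ∧ (∀ v, ψ v ≠ ∞) ∧ ∀ v, (∑' w : V, M v w * ψ w) = ψ v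

/-- A minimal harmonic vector. -/
def IsMinimalHarmonic (M : V → V → ℝ≥0∞) (ψ : V → ℝ≥0∞) : Prop :=
  IsHarmonic M ψ ∧ ∀ φ : V → ℝ≥0∞, IsHarmonic M φ → (∀ v, φ v ≤ ψ v) →
    ∃ c : ℝ≥0, 0 < c ∧ ∀ v, φ v = (c : ℝ≥0∞) * ψ v

/-- An `e^{βF}`-conformal measure: a nonzero Borel measure which is finite on the
cylinders of vertices and satisfies `m(σ(B ∩ Z(a))) = e^{βF(a)} m(B ∩ Z(a))`. -/
def Conformal (s r : A → V) (F : A → ℝ) (β : ℝ) (m : Measure (PathSpace s r)) : Prop :=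
  m ≠ 0 ∧ (∀ v : V, m (cylV s r v) ≠ ∞) ∧
    ∀ (a : A) (B : Set (PathSpace s r)), MeasurableSet B →
      m (shift s r '' (B ∩ cylA s r a)) =
        ENNReal.ofReal (Real.exp (β * F a)) * m (B ∩ cylA s r a)

/-- An extremal conformal measure: every conformal measure dominated by it is a
positive scalar multiple of it. -/
def ExtremalConformal (s r : A → V) (F : A → ℝ) (β : ℝ) (m : Measure (PathSpace s r)) : Prop :=
  Conformal s r F β m ∧ ∀ m' : Measure (PathSpace s r), Conformal s r F β m' →
    (∀ B : Set (PathSpace s r), MeasurableSet B → m' B ≤ m B) →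
    ∃ c : ℝ≥0, 0 < c ∧ m' = (c : ℝ≥0∞) • m

/-- A wandering path: its vertices leave every finite set of vertices. -/
def Wandering (s r : A → V) (p : PathSpace s r) : Prop :=
  ∀ F₀ : Finset V, ∃ N : ℕ, ∀ i, N ≤ i → s (p.seq i) ∉ F₀

/-- A ray: an infinite path with pairwise distinct vertices. -/
def IsRay (s r : A → V) (p : PathSpace s r) : Prop :=
  Function.Injective fun i => s (p.seq i)

/-- The relation `p → q` between (wandering) paths. -/
def Leads (s r : A → V) (p q : PathSpace s r) : Prop :=
  ∀ (F₀ : Finset V) (N : ℕ), ∃ n₁ n₂ : ℕ, N ≤ n₁ ∧ N ≤ n₂ ∧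
    ∃ μ : FinPath s r, μ.src = s (p.seq n₁) ∧ finRng s r μ = s (q.seq n₂) ∧
      ∀ v ∈ finVerts s r μ, v ∉ F₀

/-- Nonempty path lists from `v` to `w`. -/
def IsPathList (s r : A → V) (l : List A) (v w : V) : Prop :=
  l ≠ [] ∧ l.Chain' (fun a b => r a = s b) ∧
    (∀ h : l ≠ [], s (l.head h) = v) ∧ ∀ h : l ≠ [], r (l.getLast h) = w

/-- The set `L_j(y)` (zero-indexed in `j`). -/
def Lset (s r : A → V) (p : PathSpace s r) (j : ℕ) : Set (List A) :=
  {l | IsPathList s r l (s (p.seq j)) (s (p.seq (j + 1))) ∧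
    ∀ a ∈ l, ∀ i ≤ j, r a ≠ s (p.seq i)}

/-- The sum `Σ_{μ ∈ L_j(y)} e^{-βF(μ)}`. -/
noncomputable def LSum (s r : A → V) (F : A → ℝ) (β : ℝ) (p : PathSpace s r) (j : ℕ) : ℝ≥0∞ :=
  ∑' l : Lset s r p j, ENNReal.ofReal (Real.exp (-(β * (l.1.map F).sum)))

/-- The product `𝕎(y[1,k+1[)` (zero-indexed: the product of the first `k` level sums). -/
noncomputable def Wprod (s r : A → V) (F : A → ℝ) (β : ℝ) (p : PathSpace s r) (k : ℕ) : ℝ≥0∞ :=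
  ∏ j ∈ Finset.range k, LSum s r F β p j

/-- `𝕍_β(v,y)`: the limit of the nondecreasing sequence of quotients. -/
noncomputable def Vbeta (s r : A → V) (F : A → ℝ) (β : ℝ) (v : V) (p : PathSpace s r) : ℝ≥0∞ :=
  Filter.limsup (fun k => Green s r F β v (s (p.seq k)) / Wprod s r F β p k) Filter.atTop

/-- `B_k(y)` (zero-indexed in `k`). -/
def Bset (s r : A → V) (p : PathSpace s r) (k : ℕ) : Set (PathSpace s r) :=
  {x | s (x.seq 0) = s (p.seq k) ∧ ∀ i, 1 ≤ i → ∀ j ≤ k, s (x.seq i) ≠ s (p.seq j)}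

/-- `𝔹_k(y)` (zero-indexed in `k`). -/
def BBset (s r : A → V) (p : PathSpace s r) (k : ℕ) : Set (PathSpace s r) :=
  Bset s r p k ∩ ⋂ (j : ℕ) (_ : k + 1 ≤ j), ⋃ i : ℕ, (shift s r)^[i] ⁻¹' Bset s r p j

/-- `𝔹(y)`. -/
def BB (s r : A → V) (p : PathSpace s r) : Set (PathSpace s r) :=
  ⋃ (n : ℕ) (k : ℕ), (shift s r)^[n] ⁻¹' ((shift s r)^[k] '' BBset s r p 0)

/-- A simple path from `v` to `w`: no arrow except possibly the last one has range `w`. -/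
def IsSimplePath (s r : A → V) (v w : V) (l : List A) : Prop :=
  IsPathList s r l v w ∧ ∀ a ∈ l.dropLast, r a ≠ w

/-- `R_{βF}(v,w)`: the sum of `e^{-βF(ν)}` over all simple paths `ν` from `v` to `w`. -/
noncomputable def Rsum (s r : A → V) (F : A → ℝ) (β : ℝ) (v w : V) : ℝ≥0∞ :=
  ∑' l : {l : List A // IsSimplePath s r v w l},
    ENNReal.ofReal (Real.exp (-(β * (l.1.map F).sum)))

open Classical in
/-- The restriction of a matrix to a subset of the index set (extended by `0`). -/
noncomputable def restrMat (M : V → V → ℝ≥0∞) (S : Set V) (v w : V) : ℝ≥0∞ :=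
  if v ∈ S ∧ w ∈ S then M v w else 0

/-- A loop: a nonempty path list whose range equals its source. -/
def IsLoop (s r : A → V) (l : List A) : Prop :=
  l ≠ [] ∧ l.Chain' (fun a b => r a = s b) ∧
    ∀ h : l ≠ [], r (l.getLast h) = s (l.head h)

section Basic

variable {s r : A → V} {F : A → ℝ} {β : ℝ} {v₀ : V}

/-! ### Coordinates and measurability -/

lemma shift_iter_seq (q : PathSpace s r) (i j : ℕ) :
    ((shift s r)^[i] q).seq j = q.seq (j + i) := by
  induction i generalizing q with
  | zero => rfl
  | succ i ih =>
    rw [Function.iterate_succ_apply, ih]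
    change q.seq (j + i + 1) = _
    rfl

lemma shift_iter_add (q : PathSpace s r) (i j : ℕ) :
    (shift s r)^[i] ((shift s r)^[j] q) = (shift s r)^[i + j] q :=
  (Function.iterate_add_apply _ _ _ _).symm

/-- Every function of a single coordinate is measurable, since the arrows carry the discrete
σ-algebra. -/
lemma measurable_coord {γ : Type*} [MeasurableSpace γ] (h : A → γ) (k : ℕ) :
    Measurable fun q : PathSpace s r => h (q.seq k) := by
  let _ : MeasurableSpace A := ⊤
  have h1 : Measurable h := measurable_from_top
  have h2 : Measurable fun q : PathSpace s r => q.seq := comap_measurable _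
  exact h1.comp ((measurable_pi_apply k).comp h2)

lemma measurableSet_coord (T : Set A) (k : ℕ) :
    MeasurableSet {q : PathSpace s r | q.seq k ∈ T} := by
  let _ : MeasurableSpace A := ⊤
  exact measurable_coord (s := s) (r := r) (fun a : A => a) k
    (MeasurableSpace.measurableSet_top (s := T))

lemma measurableSet_coordV (T : Set V) (k : ℕ) :
    MeasurableSet {q : PathSpace s r | s (q.seq k) ∈ T} :=
  measurableSet_coord (s ⁻¹' T) k

lemma measurableSet_cylV (v : V) : MeasurableSet (cylV s r v) :=
  measurableSet_coordV {v} 0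

lemma measurableSet_cylA (a : A) : MeasurableSet (cylA s r a) :=
  measurableSet_coord {a} 0

lemma measurable_shift : Measurable (shift s r) := by
  let _ : MeasurableSpace A := ⊤
  refine measurable_comap_iff.2 ?_
  exact measurable_pi_lambda _ fun i => measurable_coord (fun a : A => a) (i + 1)

lemma measurable_shift_iter (n : ℕ) : Measurable ((shift s r)^[n]) :=
  measurable_shift.iterate n

/-! ### Conformal measures as Markov measures -/

lemma image_shift_eq (a : A) (C : Set (PathSpace s r)) :
    shift s r '' (shift s r ⁻¹' C ∩ cylA s r a) = C ∩ cylV s r (r a) := by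
  ext x
  constructor
  · rintro ⟨q, ⟨hq, ha⟩, rfl⟩
    refine ⟨hq, ?_⟩
    have := q.compat 0
    rw [show q.seq 0 = a from ha] at this
    exact this.symm
  · rintro ⟨hx, hr⟩
    let q : PathSpace s r := ⟨fun i => Nat.casesOn i a x.seq, fun i => by
      cases i with
      | zero => exact (show s (x.seq 0) = r a from hr).symm
      | succ i => exact x.compat i⟩
    exact ⟨q, ⟨hx, show q.seq 0 = a from rfl⟩, rfl⟩

/-- The form in which conformality is used: the mass of `Z(a) ∩ σ⁻¹(C)`. -/
lemma Conformal.cylA_inter {m : Measure (PathSpace s r)} (hm : Conformal s r F β m) (a : A)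
    {C : Set (PathSpace s r)} (hC : MeasurableSet C) :
    m (cylA s r a ∩ shift s r ⁻¹' C) =
      ENNReal.ofReal (Real.exp (-(β * F a))) * m (C ∩ cylV s r (r a)) := by
  have h := hm.2.2 a (shift s r ⁻¹' C) (measurable_shift hC)
  rw [image_shift_eq] at h
  rw [h, ← mul_assoc, ← ENNReal.ofReal_mul (Real.exp_nonneg _), ← Real.exp_add,
    Set.inter_comm]
  simp

lemma Conformal.step [Countable A] {m : Measure (PathSpace s r)}
    (hm : Conformal s r F β m) (v : V) {C : Set (PathSpace s r)} (hC : MeasurableSet C) :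
    m (cylV s r v ∩ shift s r ⁻¹' C) = ∑' w, Amat s r F β v w * m (C ∩ cylV s r w) := by
  have h1 : cylV s r v ∩ shift s r ⁻¹' C =
      ⋃ a : {a : A // s a = v}, cylA s r a.1 ∩ shift s r ⁻¹' C := by
    ext q
    simp only [Set.mem_inter_iff, Set.mem_iUnion]
    constructor
    · rintro ⟨h, hq⟩
      exact ⟨⟨q.seq 0, h⟩, rfl, hq⟩
    · rintro ⟨⟨a, ha⟩, h, hq⟩
      refine ⟨?_, hq⟩
      change s (q.seq 0) = v
      rw [show q.seq 0 = a from h, ha]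
  rw [h1, measure_iUnion]
  · simp_rw [hm.cylA_inter _ hC]
    -- sort the arrows leaving `v` by their range
    let e : (Σ w : V, {a : A // s a = v ∧ r a = w}) ≃ {a : A // s a = v} :=
      { toFun := fun x => ⟨x.2.1, x.2.2.1⟩
        invFun := fun a => ⟨r a.1, a.1, a.2, rfl⟩
        left_inv := by rintro ⟨w, a, h, rfl⟩; rfl
        right_inv := fun a => rfl }
    rw [← e.tsum_eq, ENNReal.tsum_sigma']
    refine tsum_congr fun w => ?_
    rw [Amat, ← ENNReal.tsum_mul_right]
    refine tsum_congr fun a => ?_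
    change _ * m (C ∩ cylV s r (r a.1)) = _
    rw [a.2.2]
    rfl
  · intro a b hab
    refine Set.disjoint_left.2 fun q hq hq' => hab ?_
    exact Subtype.ext ((show q.seq 0 = a.1 from hq.1).symm.trans hq'.1)
  · exact fun a => (measurableSet_cylA _).inter (measurable_shift hC)

lemma matPow_zero_tsum (M : V → V → ℝ≥0∞) (v : V) (g : V → ℝ≥0∞) :
    ∑' w, matPow M 0 v w * g w = g v := by
  rw [tsum_eq_single v]
  · simp [matPow]
  · intro w hw
    simp [matPow, hw]

lemma Conformal.steps [Countable A] {m : Measure (PathSpace s r)}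
    (hm : Conformal s r F β m) (n : ℕ) (v : V) {C : Set (PathSpace s r)}
    (hC : MeasurableSet C) :
    m (cylV s r v ∩ (shift s r)^[n] ⁻¹' C) = ∑' w, Apow s r F β n v w * m (C ∩ cylV s r w) := by
  induction n generalizing v with
  | zero =>
    rw [Set.inter_comm]
    exact (matPow_zero_tsum _ v fun w => m (C ∩ cylV s r w)).symm
  | succ n ih =>
    have : (shift s r)^[n + 1] ⁻¹' C = shift s r ⁻¹' ((shift s r)^[n] ⁻¹' C) := rfl
    rw [this, hm.step v (measurable_shift_iter n hC)]
    simp_rw [Set.inter_comm _ (cylV s r _)] at ih ⊢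
    simp_rw [ih]
    simp_rw [Apow, matPow, ← ENNReal.tsum_mul_right, ← ENNReal.tsum_mul_left, ← mul_assoc]
    exact ENNReal.tsum_comm

lemma Conformal.green [Countable A] {m : Measure (PathSpace s r)}
    (hm : Conformal s r F β m) (v : V) {C : Set (PathSpace s r)} (hC : MeasurableSet C) :
    ∑' n, m (cylV s r v ∩ (shift s r)^[n] ⁻¹' C) =
      ∑' w, Green s r F β v w * m (C ∩ cylV s r w) := by
  simp_rw [hm.steps _ v hC, Green, ← ENNReal.tsum_mul_right]
  exact ENNReal.tsum_comm

lemma lintegral_vertex [Countable V] (m : Measure (PathSpace s r)) (g : V → ℝ≥0∞)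
    {C : Set (PathSpace s r)} (hC : MeasurableSet C) :
    ∫⁻ x in C, g (s (x.seq 0)) ∂m = ∑' w, g w * m (C ∩ cylV s r w) := by
  have h1 : C = ⋃ w, C ∩ cylV s r w := by
    rw [← Set.inter_iUnion]
    refine (Set.inter_eq_left.2 fun q _ => Set.mem_iUnion.2 ⟨s (q.seq 0), rfl⟩).symm
  conv_lhs => rw [h1]
  rw [lintegral_iUnion]
  · refine tsum_congr fun w => ?_
    rw [← setLIntegral_const]
    refine setLIntegral_congr_fun (hC.inter (measurableSet_cylV w)) fun x hx => ?_
    rw [show s (x.seq 0) = w from hx.2]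
  · exact fun w => hC.inter (measurableSet_cylV w)
  · intro a b hab
    refine Set.disjoint_left.2 fun q hq hq' => hab ?_
    exact (show s (q.seq 0) = a from hq.2).symm.trans hq'.2

/-- The sum of `f` over all shifts of a path. -/
noncomputable def tailSum (f : PathSpace s r → ℝ≥0∞) (q : PathSpace s r) : ℝ≥0∞ :=
  ∑' i, f ((shift s r)^[i] q)

lemma measurable_tailSum {f : PathSpace s r → ℝ≥0∞} (hf : Measurable f) :
    Measurable (tailSum f) :=
  Measurable.tsum fun i => hf.comp (measurable_shift_iter i)

/-- Occupation formula: summing `f` along the paths started at `v` amounts to integrating `f`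
against the density `G(v, ·)`. -/
lemma Conformal.lintegral_tailSum [Countable V] [Countable A] {m : Measure (PathSpace s r)}
    (hm : Conformal s r F β m) (v : V) {f : PathSpace s r → ℝ≥0∞} (hf : Measurable f) :
    ∫⁻ q in cylV s r v, tailSum f q ∂m = ∫⁻ x, Green s r F β v (s (x.seq 0)) * f x ∂m := by
  have hG : Measurable fun x : PathSpace s r => Green s r F β v (s (x.seq 0)) :=
    measurable_coord (fun a => Green s r F β v (s a)) 0
  have key : Measure.sum (fun n => (m.restrict (cylV s r v)).map ((shift s r)^[n])) =
      m.withDensity fun x => Green s r F β v (s (x.seq 0)) := by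
    ext C hC
    rw [Measure.sum_apply _ hC, withDensity_apply _ hC, lintegral_vertex m _ hC, ← hm.green v hC]
    refine tsum_congr fun n => ?_
    rw [Measure.map_apply (measurable_shift_iter n) hC,
      Measure.restrict_apply (measurable_shift_iter n hC), Set.inter_comm]
  have h2 : ∫⁻ x, f x ∂(m.withDensity fun x => Green s r F β v (s (x.seq 0))) =
      ∫⁻ x, Green s r F β v (s (x.seq 0)) * f x ∂m :=
    lintegral_withDensity_eq_lintegral_mul m hG hf
  rw [← h2, ← key, lintegral_sum_measure]
  simp_rw [lintegral_map hf (measurable_shift_iter _)]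
  exact lintegral_tsum fun i => (hf.comp (measurable_shift_iter i)).aemeasurable

/-! ### The Green function and the Martin kernel -/

lemma matPow_mul_le (M : V → V → ℝ≥0∞) (n k : ℕ) (u v w : V) :
    matPow M n u v * matPow M k v w ≤ matPow M (n + k) u w := by
  induction n generalizing u with
  | zero =>
    by_cases h : v = u
    · subst h; simp [matPow]
    · simp [matPow, h]
  | succ n ih =>
    rw [Nat.succ_add]
    simp only [matPow]
    rw [← ENNReal.tsum_mul_right]
    refine ENNReal.tsum_le_tsum fun x => ?_
    rw [mul_assoc]
    gcongr
    exact ih x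

lemma Apow_mul_green_le (n : ℕ) (u v w : V) :
    Apow s r F β n u v * Green s r F β v w ≤ Green s r F β u w := by
  rw [Green, ← ENNReal.tsum_mul_left]
  calc _ ≤ ∑' k, Apow s r F β (n + k) u w :=
        ENNReal.tsum_le_tsum fun k => matPow_mul_le _ n k u v w
    _ ≤ Green s r F β u w :=
        ENNReal.tsum_comp_le_tsum_of_injective (add_right_injective n) _

lemma exists_Apow_ne_zero (hv₀ : ∀ v : V, Green s r F β v₀ v ≠ 0 ∧ Green s r F β v₀ v ≠ ∞)
    (v : V) : ∃ n, Apow s r F β n v₀ v ≠ 0 := by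
  by_contra! h
  exact (hv₀ v).1 (ENNReal.tsum_eq_zero.2 h)

lemma green_ne_top (hv₀ : ∀ v : V, Green s r F β v₀ v ≠ 0 ∧ Green s r F β v₀ v ≠ ∞)
    (v w : V) : Green s r F β v w ≠ ∞ := by
  intro h
  obtain ⟨n, hn⟩ := exists_Apow_ne_zero hv₀ v
  have := Apow_mul_green_le (s := s) (r := r) (F := F) (β := β) n v₀ v w
  rw [h, ENNReal.mul_top hn] at this
  exact (hv₀ w).2 (top_le_iff.1 this)

lemma martinK_bdd (hv₀ : ∀ v : V, Green s r F β v₀ v ≠ 0 ∧ Green s r F β v₀ v ≠ ∞)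
    (v : V) : ∃ C : ℝ≥0∞, C ≠ ∞ ∧ ∀ w, MartinK s r F β v₀ v w ≤ C := by
  obtain ⟨n, hn⟩ := exists_Apow_ne_zero hv₀ v
  refine ⟨(Apow s r F β n v₀ v)⁻¹, ENNReal.inv_ne_top.2 hn, fun w => ?_⟩
  have hle := Apow_mul_green_le (s := s) (r := r) (F := F) (β := β) n v₀ v w
  have hfin : Apow s r F β n v₀ v ≠ ∞ :=
    ne_top_of_le_ne_top (hv₀ v).2 (ENNReal.le_tsum n)
  rw [MartinK]
  refine ENNReal.div_le_of_le_mul ?_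
  rw [mul_comm, ← div_eq_mul_inv, ENNReal.le_div_iff_mul_le (Or.inl hn) (Or.inl hfin), mul_comm]
  exact hle

lemma martinK_mul_green (hv₀ : ∀ v : V, Green s r F β v₀ v ≠ 0 ∧ Green s r F β v₀ v ≠ ∞)
    (v w : V) : Green s r F β v₀ w * MartinK s r F β v₀ v w = Green s r F β v w :=
  ENNReal.mul_div_cancel (hv₀ w).1 (hv₀ w).2

/-- The Martin kernel is the density that carries occupation sums along paths from `v₀` to
occupation sums along paths from `v`. -/
lemma Conformal.transfer [Countable V] [Countable A]
    (hv₀ : ∀ v : V, Green s r F β v₀ v ≠ 0 ∧ Green s r F β v₀ v ≠ ∞)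
    {m : Measure (PathSpace s r)}
    (hm : Conformal s r F β m) (v : V) {f : PathSpace s r → ℝ≥0∞} (hf : Measurable f) :
    ∫⁻ q in cylV s r v₀, tailSum (fun x => MartinK s r F β v₀ v (s (x.seq 0)) * f x) q ∂m =
      ∫⁻ q in cylV s r v, tailSum f q ∂m := by
  have hk : Measurable fun x : PathSpace s r => MartinK s r F β v₀ v (s (x.seq 0)) :=
    measurable_coord (fun a => MartinK s r F β v₀ v (s a)) 0
  rw [hm.lintegral_tailSum v hf,
    hm.lintegral_tailSum (f := fun x => MartinK s r F β v₀ v (s (x.seq 0)) * f x) v₀ (hk.mul hf)]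
  simp_rw [← mul_assoc, martinK_mul_green hv₀]

/-! ### Wandering and null sets -/

lemma Conformal.null_of_null [Countable V] [Countable A]
    (hv₀ : ∀ v : V, Green s r F β v₀ v ≠ 0 ∧ Green s r F β v₀ v ≠ ∞)
    {m : Measure (PathSpace s r)} (hm : Conformal s r F β m) {B : Set (PathSpace s r)}
    (hB : MeasurableSet B) (hinv : shift s r ⁻¹' B = B) (h0 : m (cylV s r v₀ ∩ B) = 0) :
    m B = 0 := by
  have h1 : ∀ v, m (B ∩ cylV s r v) = 0 := by
    intro v
    obtain ⟨n, hn⟩ := exists_Apow_ne_zero hv₀ v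
    have h2 := hm.steps n v₀ hB
    have h3 : (shift s r)^[n] ⁻¹' B = B := by
      clear hn h2
      induction n with
      | zero => rfl
      | succ n ih => rw [Function.iterate_succ, Set.preimage_comp, ih, hinv]
    rw [h3, h0] at h2
    have := ENNReal.tsum_eq_zero.1 h2.symm v
    exact (mul_eq_zero.1 this).resolve_left hn
  refine measure_mono_null (t := ⋃ v, B ∩ cylV s r v) ?_ (measure_iUnion_null h1)
  exact fun q hq => Set.mem_iUnion.2 ⟨s (q.seq 0), hq, rfl⟩

lemma Conformal.cylV_ne_zero [Countable V] [Countable A]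
    (hv₀ : ∀ v : V, Green s r F β v₀ v ≠ 0 ∧ Green s r F β v₀ v ≠ ∞)
    {m : Measure (PathSpace s r)} (hm : Conformal s r F β m) : m (cylV s r v₀) ≠ 0 := by
  intro h
  refine hm.1 (Measure.measure_univ_eq_zero.1 ?_)
  exact hm.null_of_null hv₀ MeasurableSet.univ rfl (by simpa using h)

/-- Transience: by Borel–Cantelli, finiteness of the Green function forces almost every path
to leave every finite set of vertices. -/
lemma Conformal.ae_eventually_ne [Countable V] [Countable A]
    (hv₀ : ∀ v : V, Green s r F β v₀ v ≠ 0 ∧ Green s r F β v₀ v ≠ ∞)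
    {m : Measure (PathSpace s r)} (hm : Conformal s r F β m) :
    ∀ᵐ q ∂m, Wandering s r q := by
  have h1 : ∀ v w, ∀ᵐ q ∂m, q ∈ cylV s r v → ∀ᶠ n in atTop, s (q.seq n) ≠ w := by
    intro v w
    have hsum : ∑' n, m (cylV s r v ∩ (shift s r)^[n] ⁻¹' cylV s r w) ≠ ∞ := by
      rw [hm.green v (measurableSet_cylV w), tsum_eq_single w]
      · rw [Set.inter_self]
        exact ENNReal.mul_ne_top (green_ne_top hv₀ v w) (hm.2.1 w)
      · intro u hu
        have : cylV s r w ∩ cylV s r u = ∅ := by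
          ext q
          simp only [cylV, Set.mem_inter_iff, Set.mem_ofPred_eq, Set.mem_empty_iff_false, iff_false]
          rintro ⟨h, h'⟩
          exact hu (h'.symm.trans h)
        simp [this]
    filter_upwards [ae_eventually_notMem hsum] with q hq hqv
    filter_upwards [hq] with n hn hw
    refine hn ⟨hqv, ?_⟩
    change s (((shift s r)^[n] q).seq 0) = w
    rw [shift_iter_seq, zero_add, hw]
  filter_upwards [ae_all_iff.2 fun v => ae_all_iff.2 (h1 v)] with q hq F₀
  have h2 : ∀ᶠ n in atTop, ∀ w ∈ F₀, s (q.seq n) ≠ w :=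
    (Filter.eventually_all_finset F₀).2 fun w _ => hq _ w rfl
  obtain ⟨N, hN⟩ := eventually_atTop.1 h2
  exact ⟨N, fun i hi hmem => hN i hi _ hmem rfl⟩

end Basic

/-! ### Last visits -/

section LastVisit

variable {s r : A → V} {F : A → ℝ} {β : ℝ} {v₀ : V}

/-- The paths that are in `Q` but none of whose proper shifts are: `σ^i q ∈ lastIn Q` says that `i`
is the time of the last visit of `q` to `Q`. -/
def lastIn (Q : Set (PathSpace s r)) : Set (PathSpace s r) :=
  {x | x ∈ Q ∧ ∀ i, (shift s r)^[i + 1] x ∉ Q}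

lemma measurableSet_lastIn {Q : Set (PathSpace s r)} (hQ : MeasurableSet Q) :
    MeasurableSet (lastIn Q) := by
  have : lastIn Q = Q ∩ ⋂ i, ((shift s r)^[i + 1] ⁻¹' Q)ᶜ := by
    ext x
    simp [lastIn]
  rw [this]
  exact hQ.inter (MeasurableSet.iInter fun i => (measurable_shift_iter _ hQ).compl)

lemma lastIn_le {Q : Set (PathSpace s r)} {q : PathSpace s r} {i j : ℕ}
    (hi : (shift s r)^[i] q ∈ lastIn Q) (hj : (shift s r)^[j] q ∈ Q) : j ≤ i := by
  by_contra! h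
  obtain ⟨l, rfl⟩ := Nat.exists_eq_add_of_lt h
  refine hi.2 l ?_
  rw [shift_iter_add, show l + 1 + i = i + l + 1 by ring]
  exact hj

lemma exists_lastIn {Q : Set (PathSpace s r)} {q : PathSpace s r} {i N : ℕ}
    (hi : (shift s r)^[i] q ∈ Q) (hN : ∀ j, N ≤ j → (shift s r)^[j] q ∉ Q) :
    ∃ j, (shift s r)^[j] q ∈ lastIn Q := by
  classical
  have hiN : i ≤ N := by
    by_contra! h
    exact hN i h.le hi
  let P : ℕ → Prop := fun j => (shift s r)^[j] q ∈ Q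
  refine ⟨Nat.findGreatest P N, Nat.findGreatest_spec (P := P) hiN hi, fun l hl => ?_⟩
  rw [shift_iter_add] at hl
  by_cases hlN : l + 1 + Nat.findGreatest P N ≤ N
  · have := Nat.le_findGreatest (P := P) hlN hl
    omega
  · exact hN _ (by omega) hl

/-- A function vanishing off `lastIn Q` contributes to the sum along a path only at the time of the
last visit. -/
lemma tailSum_eq {Q : Set (PathSpace s r)} {f : PathSpace s r → ℝ≥0∞}
    (hf : ∀ x, x ∉ lastIn Q → f x = 0) {q : PathSpace s r} {i : ℕ}
    (hi : (shift s r)^[i] q ∈ lastIn Q) : tailSum f q = f ((shift s r)^[i] q) := by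
  refine tsum_eq_single i fun j hj => hf _ fun hj' => hj ?_
  exact le_antisymm (lastIn_le hi hj'.1) (lastIn_le hj' hi.1)

lemma tailSum_eq_zero {Q : Set (PathSpace s r)} {f : PathSpace s r → ℝ≥0∞}
    (hf : ∀ x, x ∉ lastIn Q → f x = 0) {q : PathSpace s r}
    (hq : ∀ i, (shift s r)^[i] q ∉ lastIn Q) : tailSum f q = 0 :=
  ENNReal.tsum_eq_zero.2 fun i => hf _ (hq i)

/-- The value of `g` at the vertex of the last visit to `Q` (and `0` if there is none). -/
noncomputable def exitVal (Q : Set (PathSpace s r)) (g : V → ℝ≥0∞) : PathSpace s r → ℝ≥0∞ :=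
  tailSum ((lastIn Q).indicator fun x => g (s (x.seq 0)))

lemma measurable_exitVal {Q : Set (PathSpace s r)} (hQ : MeasurableSet Q) (g : V → ℝ≥0∞) :
    Measurable (exitVal Q g) :=
  measurable_tailSum ((measurable_coord (fun a => g (s a)) 0).indicator (measurableSet_lastIn hQ))

lemma exitVal_eq {Q : Set (PathSpace s r)} (g : V → ℝ≥0∞) {q : PathSpace s r} {i : ℕ}
    (hi : (shift s r)^[i] q ∈ lastIn Q) : exitVal Q g q = g (s (q.seq i)) := by
  rw [exitVal, tailSum_eq (fun x hx => Set.indicator_of_notMem hx _) hi,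
    Set.indicator_of_mem hi, shift_iter_seq, zero_add]

lemma exitVal_eq_zero {Q : Set (PathSpace s r)} (g : V → ℝ≥0∞) {q : PathSpace s r}
    (hq : ∀ i, (shift s r)^[i] q ∉ lastIn Q) : exitVal Q g q = 0 :=
  tailSum_eq_zero (fun _ hx => Set.indicator_of_notMem hx _) hq

lemma exitVal_le {Q : Set (PathSpace s r)} {g : V → ℝ≥0∞} {C : ℝ≥0∞} (hg : ∀ w, g w ≤ C)
    (q : PathSpace s r) : exitVal Q g q ≤ C := by
  by_cases h : ∃ i, (shift s r)^[i] q ∈ lastIn Q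
  · obtain ⟨i, hi⟩ := h
    rw [exitVal_eq g hi]
    exact hg _
  · push Not at h
    rw [exitVal_eq_zero g h]
    exact zero_le

lemma exitVal_shift {Q : Set (PathSpace s r)} (g : V → ℝ≥0∞) {q : PathSpace s r} {i j : ℕ}
    (hij : (shift s r)^[j + i] q ∈ Q) : exitVal Q g ((shift s r)^[i] q) = exitVal Q g q := by
  by_cases h : ∃ l, (shift s r)^[l] q ∈ lastIn Q
  · obtain ⟨l, hl⟩ := h
    have hle : j + i ≤ l := lastIn_le hl hij
    obtain ⟨t, rfl⟩ : ∃ t, l = t + i := ⟨l - i, by omega⟩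
    rw [exitVal_eq g hl]
    rw [← shift_iter_add] at hl
    rw [exitVal_eq g hl, shift_iter_seq]
  · push Not at h
    rw [exitVal_eq_zero g h, exitVal_eq_zero g]
    intro l
    rw [shift_iter_add]
    exact h _

/-- The reverse martingale property. If each visit to `Q` is followed by a visit to `Q'`, then among
paths from `v₀` the value of the Martin kernel at the last exit from `Q'` is the orthogonal
projection of its value at the last exit from `Q`. -/
lemma Conformal.orth [Countable V] [Countable A]
    (hv₀ : ∀ v : V, Green s r F β v₀ v ≠ 0 ∧ Green s r F β v₀ v ≠ ∞)
    {m : Measure (PathSpace s r)} (hm : Conformal s r F β m) (v : V)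
    {Q Q' : Set (PathSpace s r)} (hQ : MeasurableSet Q) (hQ' : MeasurableSet Q')
    (hlater : ∀ x ∈ Q, ∃ j, (shift s r)^[j] x ∈ Q')
    (hhit : ∀ᵐ q ∂m, q ∈ cylV s r v → ∃ i, (shift s r)^[i] q ∈ lastIn Q) :
    ∫⁻ q in cylV s r v₀, exitVal Q (MartinK s r F β v₀ v) q *
        exitVal Q' (MartinK s r F β v₀ v) q ∂m =
      ∫⁻ q in cylV s r v₀, exitVal Q' (MartinK s r F β v₀ v) q ^ 2 ∂m := by
  set k : V → ℝ≥0∞ := MartinK s r F β v₀ v with hk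
  let f₁ : PathSpace s r → ℝ≥0∞ := (lastIn Q).indicator (exitVal Q' k)
  let f₂ : PathSpace s r → ℝ≥0∞ := (lastIn Q').indicator fun x => k (s (x.seq 0))
  have hf₁ : Measurable f₁ := (measurable_exitVal hQ' k).indicator (measurableSet_lastIn hQ)
  have hf₂ : Measurable f₂ :=
    (measurable_coord (fun a => k (s a)) 0).indicator (measurableSet_lastIn hQ')
  have hf₁0 : ∀ x, x ∉ lastIn Q → f₁ x = 0 := fun x hx => Set.indicator_of_notMem hx _
  have hf₂0 : ∀ x, x ∉ lastIn Q' → f₂ x = 0 := fun x hx => Set.indicator_of_notMem hx _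
  have hval : ∀ {q : PathSpace s r} {i : ℕ}, (shift s r)^[i] q ∈ lastIn Q →
      f₁ ((shift s r)^[i] q) = exitVal Q' k q := by
    intro q i hi
    obtain ⟨j, hj⟩ := hlater _ hi.1
    rw [shift_iter_add] at hj
    rw [← exitVal_shift k hj]
    exact Set.indicator_of_mem hi _
  have h1 : ∀ q, exitVal Q k q * exitVal Q' k q =
      tailSum (fun x => k (s (x.seq 0)) * f₁ x) q := by
    intro q
    have h0 : ∀ x, x ∉ lastIn Q → k (s (x.seq 0)) * f₁ x = 0 := fun x hx => by
      rw [hf₁0 x hx, mul_zero]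
    by_cases h : ∃ i, (shift s r)^[i] q ∈ lastIn Q
    · obtain ⟨i, hi⟩ := h
      rw [tailSum_eq h0 hi, hval hi, exitVal_eq k hi, shift_iter_seq, zero_add]
    · push Not at h
      rw [tailSum_eq_zero h0 h, exitVal_eq_zero k h, zero_mul]
  have h2 : ∀ q, exitVal Q' k q ^ 2 = tailSum (fun x => k (s (x.seq 0)) * f₂ x) q := by
    intro q
    have h0 : ∀ x, x ∉ lastIn Q' → k (s (x.seq 0)) * f₂ x = 0 := fun x hx => by
      rw [hf₂0 x hx, mul_zero]
    by_cases h : ∃ i, (shift s r)^[i] q ∈ lastIn Q'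
    · obtain ⟨i, hi⟩ := h
      have : f₂ ((shift s r)^[i] q) = k (s (((shift s r)^[i] q).seq 0)) :=
        Set.indicator_of_mem hi _
      rw [tailSum_eq h0 hi, this, exitVal_eq k hi, shift_iter_seq, zero_add, sq]
    · push Not at h
      rw [tailSum_eq_zero h0 h, exitVal_eq_zero k h]
      simp
  simp_rw [h1, h2]
  rw [hk, hm.transfer hv₀ v hf₁, hm.transfer hv₀ v hf₂]
  refine lintegral_congr_ae ((ae_restrict_iff' (measurableSet_cylV v)).2 ?_)
  filter_upwards [hhit] with q hq hqv
  obtain ⟨i, hi⟩ := hq hqv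
  rw [tailSum_eq hf₁0 hi, hval hi]
  rfl

end LastVisit

/-! ### Almost sure convergence of the Martin kernel -/

section Convergence

variable {s r : A → V} {F : A → ℝ} {β : ℝ} {v₀ : V}

lemma Wandering.exists_lt {e : V → ℕ} (he : Function.Injective e) {q : PathSpace s r}
    (hq : Wandering s r q) (n : ℕ) : ∃ N, ∀ i, N ≤ i → n < e (s (q.seq i)) := by
  have hfin : (e ⁻¹' Set.Iic n).Finite := (Set.finite_Iic n).preimage he.injOn
  obtain ⟨N, hN⟩ := hq hfin.toFinset
  refine ⟨N, fun i hi => ?_⟩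
  have := hN i hi
  simpa using this

/-- The paths starting in the `n`-th finite set of the exhaustion of `V` given by an injection
`e : V → ℕ`. -/
def startSet (s r : A → V) (e : V → ℕ) (n : ℕ) : Set (PathSpace s r) :=
  {x | e (s (x.seq 0)) ≤ n}

lemma measurableSet_startSet (e : V → ℕ) (n : ℕ) : MeasurableSet (startSet s r e n) :=
  measurableSet_coordV {w | e w ≤ n} 0

lemma shift_mem_startSet {e : V → ℕ} {n i : ℕ} {q : PathSpace s r} :
    (shift s r)^[i] q ∈ startSet s r e n ↔ e (s (q.seq i)) ≤ n := by
  change e (s (((shift s r)^[i] q).seq 0)) ≤ n ↔ _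
  rw [shift_iter_seq, zero_add]

/-- The paths that start in the `n`-th finite set, or at whose first vertex `u` differs by at least
`ε` from its value at the last exit from the `p`-th finite set. The last visit to this set is a
stopping time for the time-reversed path. -/
def stopSet (s r : A → V) (e : V → ℕ) (u : V → ℝ) (ε : ℝ) (n p : ℕ) : Set (PathSpace s r) :=
  startSet s r e n ∪ {x | ∃ j, (shift s r)^[j] x ∈ lastIn (startSet s r e p) ∧
    ε ≤ dist (u (s (x.seq 0))) (u (s (x.seq j)))}

/-- The paths along which, after the last visit to the `n`-th finite set, `u` differs at some time
by at least `ε` from its value at the last exit from the `p`-th finite set. -/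
def oscSet (s r : A → V) (e : V → ℕ) (u : V → ℝ) (ε : ℝ) (n p : ℕ) : Set (PathSpace s r) :=
  {q | ∃ k j, ((shift s r)^[j] q ∈ lastIn (startSet s r e p) ∧ k ≤ j ∧
    ε ≤ dist (u (s (q.seq k))) (u (s (q.seq j)))) ∧ ∀ i, k ≤ i → n < e (s (q.seq i))}

lemma measurableSet_dist (u : V → ℝ) (ε : ℝ) (k j : ℕ) :
    MeasurableSet {x : PathSpace s r | ε ≤ dist (u (s (x.seq k))) (u (s (x.seq j)))} := by
  have h1 : ∀ k, Measurable fun x : PathSpace s r => u (s (x.seq k)) :=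
    fun k => measurable_coord (fun a => u (s a)) k
  exact measurableSet_le measurable_const ((h1 k).dist (h1 j))

lemma measurableSet_stopSet (e : V → ℕ) (u : V → ℝ) (ε : ℝ) (n p : ℕ) :
    MeasurableSet (stopSet s r e u ε n p) := by
  refine (measurableSet_startSet e n).union ?_
  have : {x : PathSpace s r | ∃ j, (shift s r)^[j] x ∈ lastIn (startSet s r e p) ∧
      ε ≤ dist (u (s (x.seq 0))) (u (s (x.seq j)))} =
      ⋃ j, ((shift s r)^[j] ⁻¹' lastIn (startSet s r e p)) ∩
        {x : PathSpace s r | ε ≤ dist (u (s (x.seq 0))) (u (s (x.seq j)))} := by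
    ext x; simp
  rw [this]
  exact MeasurableSet.iUnion fun j => (measurable_shift_iter j
    (measurableSet_lastIn (measurableSet_startSet e p))).inter (measurableSet_dist u ε 0 j)

lemma measurableSet_oscSet (e : V → ℕ) (u : V → ℝ) (ε : ℝ) (n p : ℕ) :
    MeasurableSet (oscSet s r e u ε n p) := by
  have : oscSet s r e u ε n p =
      ⋃ k, ⋃ j, (((shift s r)^[j] ⁻¹' lastIn (startSet s r e p)) ∩ ({x | k ≤ j} ∩
        {x : PathSpace s r | ε ≤ dist (u (s (x.seq k))) (u (s (x.seq j)))})) ∩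
        ⋂ i, ⋂ (_ : k ≤ i), {x : PathSpace s r | s (x.seq i) ∈ {w | n < e w}} := by
    ext x; simp [oscSet]
  rw [this]
  refine MeasurableSet.iUnion fun k => MeasurableSet.iUnion fun j => ?_
  refine MeasurableSet.inter ?_ (MeasurableSet.iInter fun i => MeasurableSet.iInter fun _ =>
    measurableSet_coordV _ i)
  exact (measurable_shift_iter j (measurableSet_lastIn (measurableSet_startSet e p))).inter
    ((MeasurableSet.const _).inter (measurableSet_dist u ε k j))

lemma Wandering.exists_lastIn {e : V → ℕ} (he : Function.Injective e) {q : PathSpace s r}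
    (hq : Wandering s r q) {Q : Set (PathSpace s r)} {p : ℕ} (hqQ : q ∈ Q)
    (hlater : ∀ x ∈ Q, ∃ j, (shift s r)^[j] x ∈ startSet s r e p) :
    ∃ i, (shift s r)^[i] q ∈ lastIn Q := by
  obtain ⟨N, hN⟩ := hq.exists_lt he p
  refine GraphKMS.exists_lastIn (i := 0) (N := N) hqQ fun i hi hiQ => ?_
  obtain ⟨j, hj⟩ := hlater _ hiQ
  rw [shift_iter_add, shift_mem_startSet] at hj
  exact absurd (hN (j + i) (by omega)) (by omega)

lemma two_mul_le_sq {a b : ℝ≥0∞} (ha : a ≠ ∞) (hb : b ≠ ∞) :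
    2 * (a * b) ≤ a ^ 2 + b ^ 2 := by
  lift a to ℝ≥0 using ha
  lift b to ℝ≥0 using hb
  norm_cast
  rw [← NNReal.coe_le_coe]
  push_cast
  nlinarith [sq_nonneg ((a : ℝ) - b)]

lemma two_mul_add_le_sq {a b : ℝ≥0∞} (ha : a ≠ ∞) (hb : b ≠ ∞) {ε : ℝ} (hε : 0 ≤ ε)
    (h : ε ≤ dist a.toReal b.toReal) :
    2 * (a * b) + ENNReal.ofReal (ε ^ 2) ≤ a ^ 2 + b ^ 2 := by
  lift a to ℝ≥0 using ha
  lift b to ℝ≥0 using hb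
  lift ε to ℝ≥0 using hε
  have h2 : ENNReal.ofReal ((ε : ℝ) ^ 2) = ((ε ^ 2 : ℝ≥0) : ℝ≥0∞) := by
    rw [← NNReal.coe_pow, ENNReal.ofReal_coe_nnreal]
  rw [h2]
  norm_cast
  rw [← NNReal.coe_le_coe]
  push_cast
  rw [Real.dist_eq] at h
  have h3 : (ε : ℝ) ^ 2 ≤ |(a : ℝ) - b| ^ 2 := by
    gcongr
    simpa using h
  rw [sq_abs] at h3
  nlinarith [h3]

/-- A Kolmogorov-type maximal inequality for the time-reversed path: the oscillation of the Martin
kernel between the last exits from the `n`-th and the `p`-th finite set is controlled by the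
decrease of the second moment. -/
lemma Conformal.energy [Countable V] [Countable A]
    (hv₀ : ∀ v : V, Green s r F β v₀ v ≠ 0 ∧ Green s r F β v₀ v ≠ ∞)
    {m : Measure (PathSpace s r)} (hm : Conformal s r F β m) (v : V)
    {e : V → ℕ} (he : Function.Injective e) {n p : ℕ} (hnp : n ≤ p) (hvn : e v ≤ n)
    (hv₀n : e v₀ ≤ n) {ε : ℝ} (hε : 0 ≤ ε) :
    ∫⁻ q in cylV s r v₀, exitVal (startSet s r e p) (MartinK s r F β v₀ v) q ^ 2 ∂m +
      ENNReal.ofReal (ε ^ 2) * m (cylV s r v₀ ∩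
        oscSet s r e (fun w => (MartinK s r F β v₀ v w).toReal) ε n p) ≤
    ∫⁻ q in cylV s r v₀, exitVal (startSet s r e n) (MartinK s r F β v₀ v) q ^ 2 ∂m := by
  set k : V → ℝ≥0∞ := MartinK s r F β v₀ v with hk
  set u : V → ℝ := fun w => (k w).toReal with hu
  set Qn := startSet s r e n
  set Qp := startSet s r e p
  set Qt := stopSet s r e u ε n p
  set O := oscSet s r e u ε n p
  set c := ENNReal.ofReal (ε ^ 2)
  obtain ⟨C, hC, hkC⟩ := martinK_bdd hv₀ v
  have hfin : ∀ (Q : Set (PathSpace s r)) q, exitVal Q k q ≠ ∞ := fun Q q =>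
    ne_top_of_le_ne_top hC (exitVal_le hkC q)
  have hQn : MeasurableSet Qn := measurableSet_startSet e n
  have hQp : MeasurableSet Qp := measurableSet_startSet e p
  have hQt : MeasurableSet Qt := measurableSet_stopSet e u ε n p
  have hO : MeasurableSet O := measurableSet_oscSet e u ε n p
  have hnt : ∀ x ∈ Qn, ∃ j, (shift s r)^[j] x ∈ Qt := fun x hx => ⟨0, Or.inl hx⟩
  have hnp' : ∀ x ∈ Qn, ∃ j, (shift s r)^[j] x ∈ Qp := fun x hx =>
    ⟨0, le_trans (show e (s (x.seq 0)) ≤ n from hx) hnp⟩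
  have htp : ∀ x ∈ Qt, ∃ j, (shift s r)^[j] x ∈ Qp := by
    rintro x (hx | ⟨j, hj, -⟩)
    · exact hnp' x hx
    · exact ⟨j, hj.1⟩
  have hW := hm.ae_eventually_ne hv₀
  have hstart : ∀ w, e w ≤ n → ∀ q ∈ cylV s r w, q ∈ Qn := by
    intro w hw q hq
    change e (s (q.seq 0)) ≤ n
    rwa [show s (q.seq 0) = w from hq]
  have e1 := hm.orth hv₀ v hQn hQt hnt (by
    filter_upwards [hW] with q hq hqv
    exact hq.exists_lastIn he (hstart v hvn q hqv) hnp')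
  have e2 := hm.orth hv₀ v hQt hQp htp (by
    filter_upwards [hW] with q hq hqv
    exact hq.exists_lastIn he (Or.inl (hstart v hvn q hqv)) htp)
  rw [← hk] at e1 e2
  have hZ := fun {Q : Set (PathSpace s r)} (hQ : MeasurableSet Q) => measurable_exitVal hQ k
  have i1 : 2 * ∫⁻ q in cylV s r v₀, exitVal Qt k q ^ 2 ∂m ≤
      ∫⁻ q in cylV s r v₀, exitVal Qn k q ^ 2 ∂m + ∫⁻ q in cylV s r v₀, exitVal Qt k q ^ 2 ∂m := by
    rw [← lintegral_add_left ((hZ hQn).pow_const 2), ← e1,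
      ← lintegral_const_mul _ (f := fun q => exitVal Qn k q * exitVal Qt k q)
        ((hZ hQn).mul (hZ hQt))]
    exact lintegral_mono fun q => two_mul_le_sq (hfin _ q) (hfin _ q)
  have i2 : 2 * ∫⁻ q in cylV s r v₀, exitVal Qp k q ^ 2 ∂m + c * m (cylV s r v₀ ∩ O) ≤
      ∫⁻ q in cylV s r v₀, exitVal Qt k q ^ 2 ∂m + ∫⁻ q in cylV s r v₀, exitVal Qp k q ^ 2 ∂m := by
    have hind : c * m (cylV s r v₀ ∩ O) =
        ∫⁻ q in cylV s r v₀, O.indicator (fun _ => c) q ∂m := by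
      rw [lintegral_indicator_const hO, Measure.restrict_apply hO, Set.inter_comm]
    rw [← lintegral_add_left ((hZ hQt).pow_const 2), ← e2, hind,
      ← lintegral_const_mul _ (f := fun q => exitVal Qt k q * exitVal Qp k q)
        ((hZ hQt).mul (hZ hQp)),
      ← lintegral_add_left (f := fun q => 2 * (exitVal Qt k q * exitVal Qp k q))
        (((hZ hQt).mul (hZ hQp)).const_mul 2)]
    refine lintegral_mono_ae ((ae_restrict_iff' (measurableSet_cylV v₀)).2 ?_)
    filter_upwards [hW] with q hq hqv
    by_cases hqO : q ∈ O
    · rw [Set.indicator_of_mem hqO]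
      refine two_mul_add_le_sq (hfin _ q) (hfin _ q) hε ?_
      obtain ⟨t, ht⟩ := hq.exists_lastIn he (Or.inl (hstart v₀ hv₀n q hqv)) htp
      obtain ⟨l, j, ⟨hj, hlj, hd⟩, hl⟩ := hqO
      have hlt : l ≤ t := by
        refine lastIn_le ht (Or.inr ⟨j - l, ?_, ?_⟩)
        · rw [shift_iter_add, Nat.sub_add_cancel hlj]
          exact hj
        · rw [shift_iter_seq, shift_iter_seq, Nat.sub_add_cancel hlj, zero_add]
          exact hd
      -- after time `l` the path avoids the `n`-th finite set, so it stops because `u` is far off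
      rcases ht.1 with h | ⟨i, hi, hd'⟩
      · exact absurd (shift_mem_startSet.1 h) (by have := hl t hlt; omega)
      · rw [shift_iter_add] at hi
        rw [exitVal_eq k ht, exitVal_eq k hi]
        rw [shift_iter_seq, shift_iter_seq, zero_add] at hd'
        exact hd'
    · rw [Set.indicator_of_notMem hqO, add_zero]
      exact two_mul_le_sq (hfin _ q) (hfin _ q)
  have hmoment : ∀ Q : Set (PathSpace s r), ∫⁻ q in cylV s r v₀, exitVal Q k q ^ 2 ∂m ≠ ∞ := by
    intro Q
    refine ne_top_of_le_ne_top (b := ∫⁻ _ in cylV s r v₀, C ^ 2 ∂m) ?_ (lintegral_mono fun q => ?_)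
    · rw [setLIntegral_const]
      exact ENNReal.mul_ne_top (ENNReal.pow_ne_top hC) (hm.2.1 v₀)
    · exact pow_le_pow_left₀ zero_le (exitVal_le hkC q) 2
  have hle_nt : ∫⁻ q in cylV s r v₀, exitVal Qt k q ^ 2 ∂m ≤
      ∫⁻ q in cylV s r v₀, exitVal Qn k q ^ 2 ∂m := by
    rw [two_mul] at i1
    exact (ENNReal.add_le_add_iff_right (hmoment _)).1 i1
  have hle_tp : ∫⁻ q in cylV s r v₀, exitVal Qp k q ^ 2 ∂m + c * m (cylV s r v₀ ∩ O) ≤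
      ∫⁻ q in cylV s r v₀, exitVal Qt k q ^ 2 ∂m := by
    rw [two_mul, add_assoc, add_comm] at i2
    exact (ENNReal.add_le_add_iff_right (hmoment _)).1 i2
  exact hle_tp.trans hle_nt

/-- If `u` oscillates by more than `2ε` arbitrarily late along a wandering path, then for every `n`
the path lies in all but finitely many of the sets `oscSet s r e u ε n p`. -/
lemma Wandering.mem_oscSet {e : V → ℕ} (he : Function.Injective e) {q : PathSpace s r}
    (hq : Wandering s r q) {u : V → ℝ} {ε : ℝ}
    (hosc : ∀ N, ∃ k ≥ N, ∃ l ≥ N, 2 * ε ≤ dist (u (s (q.seq k))) (u (s (q.seq l)))) (n : ℕ) :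
    ∃ P, ∀ p, P ≤ p → q ∈ oscSet s r e u ε n p := by
  obtain ⟨N, hN⟩ := hq.exists_lt he n
  obtain ⟨k, hk, l, hl, hd⟩ := hosc N
  refine ⟨max (e (s (q.seq k))) (e (s (q.seq l))), fun p hp => ?_⟩
  obtain ⟨N', hN'⟩ := hq.exists_lt he p
  have hkp : (shift s r)^[k] q ∈ startSet s r e p :=
    shift_mem_startSet.2 (le_trans (le_max_left _ _) hp)
  have hlp : (shift s r)^[l] q ∈ startSet s r e p :=
    shift_mem_startSet.2 (le_trans (le_max_right _ _) hp)
  obtain ⟨j, hj⟩ := GraphKMS.exists_lastIn (N := N') hkp fun i hi hi' => by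
    have := hN' i hi
    have := shift_mem_startSet.1 hi'
    omega
  have htri := dist_triangle_right (u (s (q.seq k))) (u (s (q.seq l))) (u (s (q.seq j)))
  by_cases h : ε ≤ dist (u (s (q.seq k))) (u (s (q.seq j)))
  · exact ⟨k, j, ⟨hj, lastIn_le hj hkp, h⟩, fun i hi => hN i (by omega)⟩
  · refine ⟨l, j, ⟨hj, lastIn_le hj hlp, ?_⟩, fun i hi => hN i (by omega)⟩
    linarith

lemma Conformal.ae_cauchy [Countable V] [Countable A]
    (hv₀ : ∀ v : V, Green s r F β v₀ v ≠ 0 ∧ Green s r F β v₀ v ≠ ∞)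
    {m : Measure (PathSpace s r)} (hm : Conformal s r F β m) (v : V) :
    ∀ᵐ q ∂m, q ∈ cylV s r v₀ →
      CauchySeq fun k => (MartinK s r F β v₀ v (s (q.seq k))).toReal := by
  obtain ⟨e, he⟩ := exists_injective_nat V
  set u : V → ℝ := fun w => (MartinK s r F β v₀ v w).toReal with hu
  set n₀ := max (e v) (e v₀)
  let I : ℕ → ℝ≥0∞ := fun n =>
    ∫⁻ q in cylV s r v₀, exitVal (startSet s r e (n₀ + n)) (MartinK s r F β v₀ v) q ^ 2 ∂m
  have hv : ∀ n, e v ≤ n₀ + n := fun n => (le_max_left _ _).trans (Nat.le_add_right _ _)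
  have hv' : ∀ n, e v₀ ≤ n₀ + n := fun n => (le_max_right _ _).trans (Nat.le_add_right _ _)
  have hI : Antitone I := by
    intro n p hnp
    exact le_trans le_self_add (hm.energy hv₀ v he (add_le_add_right hnp n₀) (hv n) (hv' n) le_rfl)
  have hIfin : ∀ n, I n ≠ ∞ := by
    intro n
    obtain ⟨C, hC, hkC⟩ := martinK_bdd hv₀ v
    refine ne_top_of_le_ne_top (b := ∫⁻ _ in cylV s r v₀, C ^ 2 ∂m) ?_ (lintegral_mono fun q => ?_)
    · rw [setLIntegral_const]
      exact ENNReal.mul_ne_top (ENNReal.pow_ne_top hC) (hm.2.1 v₀)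
    · exact pow_le_pow_left₀ zero_le (exitVal_le hkC q) 2
  set L := ⨅ n, I n
  have hIL : Tendsto (fun n => I n - L) atTop (𝓝 0) := by
    have h1 : Tendsto I atTop (𝓝 L) := tendsto_atTop_iInf hI
    have hL : L ≠ ∞ := ne_top_of_le_ne_top (hIfin 0) (iInf_le _ _)
    have := ENNReal.Tendsto.sub h1 (tendsto_const_nhds (x := L)) (Or.inl hL)
    rwa [tsub_self] at this
  have hnull : ∀ ε : ℝ, 0 < ε → m (cylV s r v₀ ∩ ⋂ n, ⋃ P, ⋂ (p : ℕ) (_ : P ≤ p),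
      oscSet s r e u ε (n₀ + n) (n₀ + p)) = 0 := by
    intro ε hε
    set c := ENNReal.ofReal (ε ^ 2)
    have hc : c ≠ 0 := by
      simp only [c, ne_eq, ENNReal.ofReal_eq_zero, not_le]
      positivity
    set S := cylV s r v₀ ∩ ⋂ n, ⋃ P, ⋂ (p : ℕ) (_ : P ≤ p), oscSet s r e u ε (n₀ + n) (n₀ + p)
    have hbound : ∀ n, c * m S ≤ I n - L := by
      intro n
      let T : ℕ → Set (PathSpace s r) := fun P => cylV s r v₀ ∩
        ⋂ (p : ℕ) (_ : P ≤ p), oscSet s r e u ε (n₀ + n) (n₀ + p)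
      have hT : Monotone T := by
        intro P P' hPP' q hq
        refine ⟨hq.1, Set.mem_iInter₂.2 fun p hp => Set.mem_iInter₂.1 hq.2 p (hPP'.trans hp)⟩
      have hST : S ⊆ ⋃ P, T P := by
        rintro q ⟨hq0, hq⟩
        obtain ⟨P, hP⟩ := Set.mem_iUnion.1 (Set.mem_iInter.1 hq n)
        exact Set.mem_iUnion.2 ⟨P, hq0, hP⟩
      calc c * m S ≤ c * m (⋃ P, T P) := by gcongr
        _ = ⨆ P, c * m (T P) := by rw [hT.measure_iUnion, ENNReal.mul_iSup]
        _ ≤ I n - L := iSup_le fun P => ?_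
      have hTP : T P ⊆ cylV s r v₀ ∩ oscSet s r e u ε (n₀ + n) (n₀ + max n P) :=
        fun q hq => ⟨hq.1, Set.mem_iInter₂.1 hq.2 _ (le_max_right _ _)⟩
      have h1 := hm.energy hv₀ v he (add_le_add_right (le_max_left n P) n₀) (hv n) (hv' n) hε.le
      have h2 : L + c * m (T P) ≤ I n :=
        le_trans (add_le_add (iInf_le _ (max n P)) (mul_le_mul_right (measure_mono hTP) c)) h1
      exact ENNReal.le_sub_of_add_le_left
        (ne_top_of_le_ne_top (hIfin 0) (iInf_le _ _)) h2
    have h0 : c * m S ≤ 0 := ge_of_tendsto' hIL hbound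
    exact (mul_eq_zero.1 (le_zero_iff.1 h0)).resolve_left hc
  have hae : ∀ᵐ q ∂m, ∀ t : ℕ, q ∉ cylV s r v₀ ∩ ⋂ n, ⋃ P, ⋂ (p : ℕ) (_ : P ≤ p),
      oscSet s r e u (1 / ((t : ℝ) + 1)) (n₀ + n) (n₀ + p) := by
    refine ae_all_iff.2 fun t => ?_
    exact measure_eq_zero_iff_ae_notMem.1 (hnull _ (by positivity))
  filter_upwards [hae, hm.ae_eventually_ne hv₀] with q hq hqW hqv
  rw [Metric.cauchySeq_iff]
  by_contra! hcon
  obtain ⟨δ, hδ, hosc⟩ := hcon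
  obtain ⟨t, ht⟩ := exists_nat_one_div_lt (half_pos hδ)
  refine hq t ⟨hqv, Set.mem_iInter.2 fun n => ?_⟩
  obtain ⟨P, hP⟩ := hqW.mem_oscSet he (u := u) (ε := 1 / ((t : ℝ) + 1)) (fun N => by
    obtain ⟨k, hk, l, hl, h⟩ := hosc N
    exact ⟨k, hk, l, hl, le_trans (by linarith) h⟩) (n₀ + n)
  exact Set.mem_iUnion.2 ⟨P, Set.mem_iInter₂.2 fun p hp => hP _ (by omega)⟩

end Convergence

/-! ### The limit of the Martin kernel along a path -/

section Limit

variable {s r : A → V} {F : A → ℝ} {β : ℝ} {v₀ : V}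

/-- The limit of `K_β(v, ·)` along a path, encoded as a limit superior so that it is defined for
every path. -/
noncomputable def martinLim (s r : A → V) (F : A → ℝ) (β : ℝ) (v₀ v : V) (q : PathSpace s r) :
    ℝ≥0∞ :=
  limsup (fun k => MartinK s r F β v₀ v (s (q.seq k))) atTop

lemma measurable_martinLim (v : V) : Measurable (martinLim s r F β v₀ v) :=
  Measurable.limsup fun k => measurable_coord (fun a => MartinK s r F β v₀ v (s a)) k

lemma martinLim_shift (v : V) : martinLim s r F β v₀ v ∘ shift s r = martinLim s r F β v₀ v := by
  ext q
  exact limsup_nat_add (fun k => MartinK s r F β v₀ v (s (q.seq k))) 1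

lemma Conformal.ae_tendsto [Countable V] [Countable A]
    (hv₀ : ∀ v : V, Green s r F β v₀ v ≠ 0 ∧ Green s r F β v₀ v ≠ ∞)
    {m : Measure (PathSpace s r)} (hm : Conformal s r F β m) (v : V) :
    ∀ᵐ q ∂m, Tendsto (fun k => MartinK s r F β v₀ v (s (q.seq k))) atTop
      (𝓝 (martinLim s r F β v₀ v q)) := by
  let li : PathSpace s r → ℝ≥0∞ := fun q =>
    liminf (fun k => MartinK s r F β v₀ v (s (q.seq k))) atTop
  have hli : Measurable li :=
    Measurable.liminf fun k => measurable_coord (fun a => MartinK s r F β v₀ v (s a)) k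
  have hlish : ∀ q, li (shift s r q) = li q := fun q =>
    liminf_nat_add (fun k => MartinK s r F β v₀ v (s (q.seq k))) 1
  let B : Set (PathSpace s r) := {q | li q = martinLim s r F β v₀ v q}ᶜ
  have hB : MeasurableSet B := (measurableSet_eq_fun hli (measurable_martinLim v)).compl
  have hinv : shift s r ⁻¹' B = B := by
    ext q
    have h1 := hlish q
    have h2 := congrFun (martinLim_shift (s := s) (r := r) (F := F) (β := β) (v₀ := v₀) v) q
    simp only [Function.comp_apply] at h2
    simp only [B, Set.mem_preimage, Set.mem_compl_iff, Set.mem_ofPred_eq, h1, h2]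
  have h0 : m (cylV s r v₀ ∩ B) = 0 := by
    refine measure_eq_zero_iff_ae_notMem.2 ?_
    filter_upwards [hm.ae_cauchy hv₀ v] with q hq
    rintro ⟨hqv, hqB⟩
    obtain ⟨ℓ, hℓ⟩ := cauchySeq_tendsto_of_complete (hq hqv)
    obtain ⟨C, hC, hkC⟩ := martinK_bdd hv₀ v
    have h1 := ENNReal.tendsto_ofReal hℓ
    simp_rw [ENNReal.ofReal_toReal (ne_top_of_le_ne_top hC (hkC _))] at h1
    exact hqB (h1.liminf_eq.trans h1.limsup_eq.symm)
  have hnull := measure_eq_zero_iff_ae_notMem.1 (hm.null_of_null hv₀ hB hinv h0)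
  filter_upwards [hnull] with q hq
  have hq' : li q = martinLim s r F β v₀ v q := by
    by_contra h
    exact hq h
  exact tendsto_of_liminf_eq_limsup hq' rfl

/-- The integral representation of the harmonic vector `v ↦ m(Z(v))`. -/
lemma Conformal.lintegral_martinLim [Countable V] [Countable A]
    (hv₀ : ∀ v : V, Green s r F β v₀ v ≠ 0 ∧ Green s r F β v₀ v ≠ ∞)
    {m : Measure (PathSpace s r)} (hm : Conformal s r F β m) (v : V) :
    ∫⁻ q in cylV s r v₀, martinLim s r F β v₀ v q ∂m = m (cylV s r v) := by
  obtain ⟨e, he⟩ := exists_injective_nat V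
  set k : V → ℝ≥0∞ := MartinK s r F β v₀ v with hk
  set n₀ := max (e v) (e v₀)
  have hv : ∀ n, e v ≤ n₀ + n := fun n => (le_max_left _ _).trans (Nat.le_add_right _ _)
  have hv' : ∀ n, e v₀ ≤ n₀ + n := fun n => (le_max_right _ _).trans (Nat.le_add_right _ _)
  have hstart : ∀ w n, e w ≤ n → ∀ q ∈ cylV s r w, q ∈ startSet s r e n := by
    intro w n hw q hq
    change e (s (q.seq 0)) ≤ n
    rwa [show s (q.seq 0) = w from hq]
  have hW := hm.ae_eventually_ne hv₀
  obtain ⟨C, hC, hkC⟩ := martinK_bdd hv₀ v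
  have h1 : ∀ n, ∫⁻ q in cylV s r v₀, exitVal (startSet s r e (n₀ + n)) k q ∂m =
      m (cylV s r v) := by
    intro n
    set Q := startSet s r e (n₀ + n)
    let f : PathSpace s r → ℝ≥0∞ := (lastIn Q).indicator fun _ => 1
    have hf : Measurable f :=
      measurable_const.indicator (measurableSet_lastIn (measurableSet_startSet e _))
    have h2 : exitVal Q k = tailSum fun x => k (s (x.seq 0)) * f x := by
      unfold exitVal
      congr 1
      ext x
      by_cases hx : x ∈ lastIn Q <;> simp [f, hx]
    rw [h2, hk, hm.transfer hv₀ v hf, ← setLIntegral_one]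
    refine lintegral_congr_ae ((ae_restrict_iff' (measurableSet_cylV v)).2 ?_)
    filter_upwards [hW] with q hq hqv
    obtain ⟨i, hi⟩ := hq.exists_lastIn he (hstart v _ (hv n) q hqv) fun x hx => ⟨0, hx⟩
    rw [tailSum_eq (fun x hx => Set.indicator_of_notMem hx _) hi]
    exact Set.indicator_of_mem hi _
  have h2 : Tendsto (fun n => ∫⁻ q in cylV s r v₀, exitVal (startSet s r e (n₀ + n)) k q ∂m) atTop
      (𝓝 (∫⁻ q in cylV s r v₀, martinLim s r F β v₀ v q ∂m)) := by
    refine tendsto_lintegral_of_dominated_convergence (fun _ => C)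
      (fun n => measurable_exitVal (measurableSet_startSet e _) k)
      (fun n => ae_of_all _ fun q => exitVal_le hkC q) ?_ ?_
    · rw [setLIntegral_const]
      exact ENNReal.mul_ne_top hC (hm.2.1 v₀)
    · refine (ae_restrict_iff' (measurableSet_cylV v₀)).2 ?_
      filter_upwards [hW, hm.ae_tendsto hv₀ v] with q hq hqt hqv
      have hex : ∀ n, ∃ i, (shift s r)^[i] q ∈ lastIn (startSet s r e (n₀ + n)) := fun n =>
        hq.exists_lastIn he (hstart v₀ _ (hv' n) q hqv) fun x hx => ⟨0, hx⟩
      choose L hL using hex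
      have hLt : Tendsto L atTop atTop := by
        refine tendsto_atTop.2 fun N => ?_
        filter_upwards [eventually_ge_atTop (e (s (q.seq N)))] with n hn
        exact lastIn_le (hL n) (shift_mem_startSet.2 (by omega))
      simp_rw [fun n => exitVal_eq k (hL n)]
      exact hqt.comp hLt
  simp_rw [h1] at h2
  exact tendsto_nhds_unique h2 tendsto_const_nhds

/-- If the Martin limits are almost surely constant, the constants are the normalized masses of the
vertex cylinders. -/
lemma Conformal.eq_of_martinLim_const [Countable V] [Countable A]
    (hv₀ : ∀ v : V, Green s r F β v₀ v ≠ 0 ∧ Green s r F β v₀ v ≠ ∞)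
    {m : Measure (PathSpace s r)} (hm : Conformal s r F β m) {v : V} {c : ℝ≥0∞}
    (hc : ∀ᵐ q ∂m, martinLim s r F β v₀ v q = c) : m (cylV s r v) = c * m (cylV s r v₀) := by
  rw [← hm.lintegral_martinLim hv₀ v, ← setLIntegral_const]
  exact lintegral_congr_ae (ae_restrict_of_ae hc)

end Limit

/-! ### Uniqueness and restriction of conformal measures -/

section Structure

variable {s r : A → V} {F : A → ℝ} {β : ℝ}

/-- The cylinder of all paths whose first `n` arrows are `w`. -/
def wordCyl (s r : A → V) (n : ℕ) (w : Fin n → A) : Set (PathSpace s r) :=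
  {q | ∀ i : Fin n, q.seq i = w i}

lemma measurableSet_wordCyl (n : ℕ) (w : Fin n → A) : MeasurableSet (wordCyl s r n w) := by
  have : wordCyl s r n w = ⋂ i : Fin n, {q : PathSpace s r | q.seq i ∈ ({w i} : Set A)} := by
    ext q; simp [wordCyl]
  rw [this]
  exact MeasurableSet.iInter fun i => measurableSet_coord _ _

lemma generateFrom_wordCyl [Countable A] :
    (inferInstance : MeasurableSpace (PathSpace s r)) =
      MeasurableSpace.generateFrom {C | ∃ n w, C = wordCyl s r n w} := by
  apply le_antisymm
  · let _ : MeasurableSpace A := ⊤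
    change MeasurableSpace.comap (fun p : PathSpace s r => p.seq) MeasurableSpace.pi ≤ _
    rw [← measurable_iff_comap_le, @measurable_pi_iff]
    intro k
    refine @measurable_to_countable' _ _ _ _ (_) _ fun a => ?_
    have : (fun p : PathSpace s r => p.seq k) ⁻¹' {a} =
        ⋃ w : {w : Fin (k + 1) → A // w (Fin.last k) = a}, wordCyl s r (k + 1) w.1 := by
      ext q
      simp only [Set.mem_preimage, Set.mem_singleton_iff, Set.mem_iUnion]
      constructor
      · intro h
        exact ⟨⟨fun i => q.seq i, h⟩, fun i => rfl⟩
      · rintro ⟨⟨w, rfl⟩, hq⟩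
        exact hq (Fin.last k)
    rw [this]
    exact MeasurableSet.iUnion fun w => MeasurableSpace.measurableSet_generateFrom ⟨_, _, rfl⟩
  · refine MeasurableSpace.generateFrom_le ?_
    rintro C ⟨n, w, rfl⟩
    exact measurableSet_wordCyl n w

lemma wordCyl_inter {n n' : ℕ} (h : n ≤ n') {w : Fin n → A} {w' : Fin n' → A}
    (hne : (wordCyl s r n w ∩ wordCyl s r n' w').Nonempty) :
    wordCyl s r n w ∩ wordCyl s r n' w' = wordCyl s r n' w' := by
  obtain ⟨x, hx, hx'⟩ := hne
  refine Set.inter_eq_right.2 fun q hq i => ?_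
  rw [← hx i, show q.seq i = _ from hq (Fin.castLE h i), ← hx' (Fin.castLE h i)]
  rfl

lemma isPiSystem_wordCyl : IsPiSystem {C | ∃ n w, C = wordCyl s r n w} := by
  rintro _ ⟨n, w, rfl⟩ _ ⟨n', w', rfl⟩ hne
  rcases le_total n n' with h | h
  · exact ⟨n', w', wordCyl_inter h hne⟩
  · rw [Set.inter_comm] at hne ⊢
    exact ⟨n, w, wordCyl_inter h hne⟩

lemma cylV_inter_wordCyl_succ (v : V) (n : ℕ) (w : Fin (n + 1) → A) :
    (s (w 0) = v → cylV s r v ∩ wordCyl s r (n + 1) w =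
      cylA s r (w 0) ∩ shift s r ⁻¹' wordCyl s r n (Fin.tail w)) ∧
    (s (w 0) ≠ v → cylV s r v ∩ wordCyl s r (n + 1) w = ∅) := by
  constructor
  · intro h
    ext q
    constructor
    · rintro ⟨-, hq⟩
      exact ⟨hq 0, fun i => hq i.succ⟩
    · rintro ⟨h0, hq⟩
      refine ⟨?_, fun i => ?_⟩
      · change s (q.seq 0) = v
        rw [show q.seq 0 = w 0 from h0, h]
      · refine Fin.cases ?_ (fun i => ?_) i
        · exact h0
        · exact hq i
  · intro h
    ext q
    simp only [Set.mem_inter_iff, Set.mem_empty_iff_false, iff_false]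
    rintro ⟨hq, hq'⟩
    refine h ?_
    rw [← hq' 0]
    exact hq

/-- A conformal measure is determined by its values on the vertex cylinders. -/
lemma Conformal.eq_smul [Countable V] [Countable A] {m m' : Measure (PathSpace s r)}
    (hm : Conformal s r F β m) (hm' : Conformal s r F β m') {c : ℝ≥0∞}
    (h : ∀ v, m' (cylV s r v) = c * m (cylV s r v)) : m' = c • m := by
  have hcyl : ∀ n (w : Fin n → A) v, m' (cylV s r v ∩ wordCyl s r n w) =
      c * m (cylV s r v ∩ wordCyl s r n w) := by
    intro n
    induction n with
    | zero =>
      intro w v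
      have : wordCyl s r 0 w = Set.univ := Set.eq_univ_of_forall fun q i => i.elim0
      rw [this, Set.inter_univ, h]
    | succ n ih =>
      intro w v
      obtain ⟨h1, h2⟩ := cylV_inter_wordCyl_succ (s := s) (r := r) v n w
      by_cases hwv : s (w 0) = v
      · rw [h1 hwv, hm.cylA_inter _ (measurableSet_wordCyl _ _),
          hm'.cylA_inter _ (measurableSet_wordCyl _ _), Set.inter_comm, ih, mul_left_comm]
      · rw [h2 hwv]
        simp
  have hcover : ⋃ v, cylV s r v = Set.univ :=
    Set.eq_univ_of_forall fun q => Set.mem_iUnion.2 ⟨s (q.seq 0), rfl⟩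
  refine Measure.ext_of_iUnion_eq_univ hcover fun v => ?_
  have : IsFiniteMeasure (m'.restrict (cylV s r v)) :=
    ⟨by rw [Measure.restrict_apply_univ]; exact (hm'.2.1 v).lt_top⟩
  refine ext_of_generate_finite _ generateFrom_wordCyl isPiSystem_wordCyl ?_ ?_
  · rintro _ ⟨n, w, rfl⟩
    rw [Measure.restrict_apply (measurableSet_wordCyl _ _),
      Measure.restrict_apply (measurableSet_wordCyl _ _), Set.inter_comm, hcyl]
    rfl
  · rw [Measure.restrict_apply_univ, Measure.restrict_apply_univ, h]
    rfl

lemma Conformal.restrict {m : Measure (PathSpace s r)} (hm : Conformal s r F β m)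
    {B : Set (PathSpace s r)} (hB : MeasurableSet B) (hinv : shift s r ⁻¹' B = B)
    (h0 : m B ≠ 0) : Conformal s r F β (m.restrict B) := by
  refine ⟨fun h => h0 (Measure.restrict_eq_zero.1 h), fun v => ?_, fun a C hC => ?_⟩
  · exact ne_top_of_le_ne_top (hm.2.1 v) (Measure.restrict_apply_le _ _)
  · have h1 : shift s r '' (C ∩ cylA s r a) ∩ B = shift s r '' ((C ∩ B) ∩ cylA s r a) := by
      rw [Set.image_inter_preimage (shift s r) (C ∩ cylA s r a) B |>.symm, hinv,
        Set.inter_right_comm]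
    rw [Measure.restrict_apply' hB, Measure.restrict_apply' hB, h1, hm.2.2 a _ (hC.inter hB),
      Set.inter_right_comm]

lemma ExtremalConformal.ergodic {m : Measure (PathSpace s r)}
    (hc : ExtremalConformal s r F β m) (B : Set (PathSpace s r)) (hB : MeasurableSet B)
    (hinv : shift s r ⁻¹' B = B) : m B = 0 ∨ m Bᶜ = 0 := by
  by_contra! h
  obtain ⟨c, hc0, hcm⟩ := hc.2 _ (hc.1.restrict hB hinv h.1)
    fun C _ => Measure.restrict_apply_le _ _
  have h1 := congrArg (fun μ => μ Bᶜ) hcm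
  simp only [Measure.restrict_apply' hB, Set.compl_inter_self, measure_empty,
    Measure.smul_apply, smul_eq_mul] at h1
  rcases mul_eq_zero.1 h1.symm with h2 | h2
  · exact hc0.ne' (ENNReal.coe_eq_zero.1 h2)
  · exact h.2 h2

/-- Loop erasure: cutting out the loops of a wandering path leaves a ray whose vertices form a
subsequence of the vertices of the path. -/
lemma Wandering.exists_ray {q : PathSpace s r} (hq : Wandering s r q) :
    ∃ (p : PathSpace s r) (k : ℕ → ℕ), IsRay s r p ∧ StrictMono k ∧
      ∀ i, s (p.seq i) = s (q.seq (k i)) := by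
  have hlast : ∀ j, ∃ t, j ≤ t ∧ s (q.seq t) = s (q.seq j) ∧
      ∀ i, t < i → s (q.seq i) ≠ s (q.seq j) := by
    intro j
    have hmem : ∀ i, (shift s r)^[i] q ∈ cylV s r (s (q.seq j)) ↔
        s (q.seq i) = s (q.seq j) := by
      intro i
      change s (((shift s r)^[i] q).seq 0) = _ ↔ _
      rw [shift_iter_seq, zero_add]
    obtain ⟨N, hN⟩ := hq {s (q.seq j)}
    obtain ⟨t, ht⟩ := GraphKMS.exists_lastIn (i := j) (N := N) ((hmem j).2 rfl) fun i hi h =>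
      hN i hi (by simpa using (hmem i).1 h)
    refine ⟨t, lastIn_le ht ((hmem j).2 rfl), (hmem t).1 ht.1, fun i hi h => ?_⟩
    exact absurd (lastIn_le ht ((hmem i).2 h)) (by omega)
  choose L hL1 hL2 hL3 using hlast
  let k : ℕ → ℕ := fun i => Nat.rec (L 0) (fun _ t => L (t + 1)) i
  have hk : ∀ i, k (i + 1) = L (k i + 1) := fun i => rfl
  have hkL : ∀ i, ∃ j, k i = L j := by
    intro i
    cases i with
    | zero => exact ⟨0, rfl⟩
    | succ i => exact ⟨_, hk i⟩
  have hmono : StrictMono k := strictMono_nat_of_lt_succ fun i => by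
    rw [hk]
    exact lt_of_lt_of_le (Nat.lt_succ_self _) (hL1 _)
  refine ⟨⟨fun i => q.seq (k i), fun i => ?_⟩, k, ?_, hmono, fun i => rfl⟩
  · rw [hk, hL2, q.compat]
  · have hne : ∀ i j, i < j → s (q.seq (k j)) ≠ s (q.seq (k i)) := by
      intro i j hij
      obtain ⟨l, hl⟩ := hkL i
      have := hL3 l (k j) (by rw [← hl]; exact hmono hij)
      rwa [← hL2 l, ← hl] at this
    intro i j hij
    rcases lt_trichotomy i j with h | h | h
    · exact absurd hij.symm (hne i j h)
    · exact h
    · exact absurd hij (hne j i h)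

end Structure

/-! ### The equivalences -/

section Equivalences

variable {s r : A → V} {F : A → ℝ} {β : ℝ} {v₀ : V} [Countable V] [Countable A]
  {m : Measure (PathSpace s r)}

lemma Conformal.ray_of_martin
    (hv₀ : ∀ v : V, Green s r F β v₀ v ≠ 0 ∧ Green s r F β v₀ v ≠ ∞) (hm : Conformal s r F β m)
    (hb : ∀ᵐ q ∂m, ∀ v : V,
      Tendsto (fun k => MartinK s r F β v₀ v (s (q.seq k))) atTop
        (𝓝 (m (cylV s r v) / m (cylV s r v₀)))) :
    ∃ p : PathSpace s r, IsRay s r p ∧ ∀ᵐ q ∂m, Wandering s r q ∧ ∀ v : V, ∃ L : ℝ≥0∞,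
      Tendsto (fun k => MartinK s r F β v₀ v (s (q.seq k))) atTop (𝓝 L) ∧
      Tendsto (fun k => MartinK s r F β v₀ v (s (p.seq k))) atTop (𝓝 L) := by
  have hW := hm.ae_eventually_ne hv₀
  have : (ae m).NeBot := ae_neBot.2 hm.1
  obtain ⟨q₀, hq₀, hq₀W⟩ := (hb.and hW).exists
  obtain ⟨p, k, hp, hk, hpk⟩ := hq₀W.exists_ray
  refine ⟨p, hp, ?_⟩
  filter_upwards [hb, hW] with q hq hqW
  refine ⟨hqW, fun v => ⟨_, hq v, ?_⟩⟩
  simp_rw [hpk]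
  exact (hq₀ v).comp hk.tendsto_atTop

lemma Conformal.martin_of_const
    (hv₀ : ∀ v : V, Green s r F β v₀ v ≠ 0 ∧ Green s r F β v₀ v ≠ ∞) (hm : Conformal s r F β m)
    {c : V → ℝ≥0∞} (hc : ∀ v, ∀ᵐ q ∂m, martinLim s r F β v₀ v q = c v) :
    ∀ᵐ q ∂m, ∀ v : V, Tendsto (fun k => MartinK s r F β v₀ v (s (q.seq k))) atTop
      (𝓝 (m (cylV s r v) / m (cylV s r v₀))) := by
  refine ae_all_iff.2 fun v => ?_
  filter_upwards [hc v, hm.ae_tendsto hv₀ v] with q h1 h2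
  rwa [hm.eq_of_martinLim_const hv₀ (hc v),
    ENNReal.mul_div_cancel_right (hm.cylV_ne_zero hv₀) (hm.2.1 v₀), ← h1]

lemma Conformal.martin_of_ray
    (hv₀ : ∀ v : V, Green s r F β v₀ v ≠ 0 ∧ Green s r F β v₀ v ≠ ∞) (hm : Conformal s r F β m)
    {p : PathSpace s r} (ha : ∀ᵐ q ∂m, Wandering s r q ∧ ∀ v : V, ∃ L : ℝ≥0∞,
      Tendsto (fun k => MartinK s r F β v₀ v (s (q.seq k))) atTop (𝓝 L) ∧
      Tendsto (fun k => MartinK s r F β v₀ v (s (p.seq k))) atTop (𝓝 L)) :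
    ∀ᵐ q ∂m, ∀ v : V, Tendsto (fun k => MartinK s r F β v₀ v (s (q.seq k))) atTop
      (𝓝 (m (cylV s r v) / m (cylV s r v₀))) := by
  refine hm.martin_of_const hv₀ (c := fun v => martinLim s r F β v₀ v p) fun v => ?_
  filter_upwards [ha] with q hq
  obtain ⟨L, h1, h2⟩ := hq.2 v
  exact h1.limsup_eq.trans h2.limsup_eq.symm

lemma Conformal.extremal_of_martin
    (hv₀ : ∀ v : V, Green s r F β v₀ v ≠ 0 ∧ Green s r F β v₀ v ≠ ∞) (hm : Conformal s r F β m)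
    (hb : ∀ᵐ q ∂m, ∀ v : V, Tendsto (fun k => MartinK s r F β v₀ v (s (q.seq k))) atTop
      (𝓝 (m (cylV s r v) / m (cylV s r v₀)))) :
    ExtremalConformal s r F β m := by
  refine ⟨hm, fun m' hm' hle => ?_⟩
  have hac : m' ≪ m := (Measure.le_iff.2 hle).absolutelyContinuous
  have h1 : ∀ v, m' (cylV s r v) = m (cylV s r v) / m (cylV s r v₀) * m' (cylV s r v₀) := by
    intro v
    refine hm'.eq_of_martinLim_const hv₀ ?_
    filter_upwards [hac.ae_le hb] with q hq
    exact (hq v).limsup_eq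
  set c := m' (cylV s r v₀) / m (cylV s r v₀)
  have hctop : c ≠ ∞ := ENNReal.div_ne_top (hm'.2.1 v₀) (hm.cylV_ne_zero hv₀)
  have hc0 : c ≠ 0 := ENNReal.div_ne_zero.2 ⟨hm'.cylV_ne_zero hv₀, hm.2.1 v₀⟩
  refine ⟨c.toNNReal, ENNReal.toNNReal_pos hc0 hctop, ?_⟩
  rw [ENNReal.coe_toNNReal hctop]
  refine hm.eq_smul hm' fun v => ?_
  rw [h1 v]
  simp only [c, div_eq_mul_inv]
  ring

lemma Conformal.martin_of_ergodic
    (hv₀ : ∀ v : V, Green s r F β v₀ v ≠ 0 ∧ Green s r F β v₀ v ≠ ∞) (hm : Conformal s r F β m)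
    (hd : ∀ B : Set (PathSpace s r), MeasurableSet B → shift s r ⁻¹' B = B →
      m B = 0 ∨ m Bᶜ = 0) :
    ∀ᵐ q ∂m, ∀ v : V, Tendsto (fun k => MartinK s r F β v₀ v (s (q.seq k))) atTop
      (𝓝 (m (cylV s r v) / m (cylV s r v₀))) := by
  have herg : PreErgodic (shift s r) m := ⟨fun B hB hinv => by
    refine eventuallyConst_set.2 ?_
    rcases hd B hB hinv with h | h
    · exact Or.inr (measure_eq_zero_iff_ae_notMem.1 h)
    · exact Or.inl (mem_ae_iff.2 h)⟩
  have hex : ∀ v, ∃ c, martinLim s r F β v₀ v =ᵐ[m] Function.const _ c := fun v =>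
    herg.ae_eq_const_of_ae_eq_comp (measurable_martinLim v) (martinLim_shift v)
  choose c hc using hex
  exact hm.martin_of_const hv₀ (c := c) hc

end Equivalences

/-- equivalent characterizations of extremality of an `e^{βF}`-conformal
measure: concentration on the set of paths with the same Martin limits as some ray,
concentration on the set of paths whose Martin limits are `m(Z(v))/m(Z(v₀))`, and
ergodicity for the shift. -/
theorem statement7 {V A : Type} [Countable V] [Countable A] (s r : A → V)
    (F : A → ℝ) (β : ℝ) (v₀ : V)
    (hv₀ : ∀ v : V, Green s r F β v₀ v ≠ 0 ∧ Green s r F β v₀ v ≠ ∞)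
    (m : Measure (PathSpace s r)) (hm : Conformal s r F β m) :
    ((∃ p : PathSpace s r, IsRay s r p ∧
        m {q : PathSpace s r | ¬ (Wandering s r q ∧ ∀ v : V, ∃ L : ℝ≥0∞,
          Filter.Tendsto (fun k => MartinK s r F β v₀ v (s (q.seq k)))
            Filter.atTop (𝓝 L) ∧
          Filter.Tendsto (fun k => MartinK s r F β v₀ v (s (p.seq k)))
            Filter.atTop (𝓝 L))} = 0) ↔
      ExtremalConformal s r F β m) ∧
    ((m {q : PathSpace s r | ¬ ∀ v : V,
          Filter.Tendsto (fun k => MartinK s r F β v₀ v (s (q.seq k))) Filter.atTop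
            (𝓝 (m (cylV s r v) / m (cylV s r v₀)))} = 0) ↔
      ExtremalConformal s r F β m) ∧
    ((∀ B : Set (PathSpace s r), MeasurableSet B → shift s r ⁻¹' B = B →
        m B = 0 ∨ m (Bᶜ) = 0) ↔
      ExtremalConformal s r F β m) := by
  have hbc := fun h => hm.extremal_of_martin hv₀ h
  have hcb := fun h : ExtremalConformal s r F β m => hm.martin_of_ergodic hv₀ h.ergodic
  simp only [← ae_iff]
  refine ⟨⟨?_, fun h => hm.ray_of_martin hv₀ (hcb h)⟩, ⟨hbc, hcb⟩,
    ⟨fun h => hbc (hm.martin_of_ergodic hv₀ h), fun h => h.ergodic⟩⟩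
  rintro ⟨p, -, hp⟩
  exact hbc (hm.martin_of_ray hv₀ hp)

end GraphKMS
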